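/- For every integer n > 3, consider the TFSM B_n with only point intervals. Then the region FSM R(B_n) has a homing sequence; specifically, the input sequence consisting of n − 2 repetitions of the abstract input (i_1,[1,1]) is a homing sequence for R(B_n). -/

import Mathlib

/-!
The delays read along the cycle of `B_n` form the cyclic word `2 ⋯ 2 3 1` with `n - 2` twos, and
its `n` windows of length `n - 2` are pairwise distinct. Indeed, for states `j < k`: if `k = n - 1`,
the first letters already differ, since the delay `1` occurs only at `n - 1`. Otherwise `k ≥ 1`
reaches `n - 2` after `n - 2 - k < n - 2` steps and then shows the delay `3`, while `j` is at that
moment at a state below `n - 2` and shows `2`. Hence `n - 2` inputs determine the initial state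
(`eq_of_delays`), and a fortiori the final one. Only the part of a run before it wraps around
from `n - 1` to `0` matters, so `FRunTo.getElem_out` describes the output on that part only.
-/

/-- A timed guard: an interval with natural-number endpoints, left-closed, and
either right-open (`rightClosed = false`, i.e. `[lo, hi)`) or right-closed
(`rightClosed = true`, i.e. `[lo, hi]`; point intervals are `[u,u]`). -/
structure Guard where
  lo : ℕ
  hi : ℕ
  rightClosed : Bool
deriving DecidableEq

/-- Membership of a timestamp in a guard. -/
def GuardMem (g : Guard) (t : ℝ) : Prop :=
  (g.lo : ℝ) ≤ t ∧ (if g.rightClosed then t ≤ (g.hi : ℝ) else t < (g.hi : ℝ))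

/-- Guard inclusion (as sets of timestamps). -/
def GuardSub (g g' : Guard) : Prop := ∀ t : ℝ, GuardMem g t → GuardMem g' t

/-- A transition of a TFSM with output delays: source state, input, timed guard,
output, positive integer output delay, destination state. -/
structure TTrans (S I O : Type) where
  src : S
  inp : I
  guard : Guard
  out : O
  delay : ℕ+
  dst : S

/-- A TFSM with output delays over states `S`, inputs `I`, outputs `O`,
given by its transition relation. -/
abbrev TFSM (S I O : Type) := Set (TTrans S I O)

variable {S I O A B : Type}

/-- Determinism: any two distinct transitions from the same state on the same input
have disjoint guards. -/
def TFSMDeterministic (M : TFSM S I O) : Prop :=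
  ∀ tr ∈ M, ∀ tr' ∈ M, tr.src = tr'.src → tr.inp = tr'.inp → tr ≠ tr' →
    ∀ t : ℝ, ¬ (GuardMem tr.guard t ∧ GuardMem tr'.guard t)

/-- A timed input sequence: nonnegative, nondecreasing timestamps. -/
def IsTimedInputSeq (α : List (I × ℝ)) : Prop :=
  (∀ p ∈ α, 0 ≤ p.2) ∧ List.Chain' (· ≤ ·) (α.map Prod.snd)

/-- `TRunTo M s t0 α trs sf`: starting at state `s` at time `t0`, the timed input
sequence `α` induces the sequence of transitions `trs`, ending at state `sf`. -/
inductive TRunTo (M : TFSM S I O) : S → ℝ → List (I × ℝ) → List (TTrans S I O) → S → Prop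
  | nil (s : S) (t0 : ℝ) : TRunTo M s t0 [] [] s
  | cons {s sf : S} {t0 t : ℝ} {i : I} {tr : TTrans S I O}
      {rest : List (I × ℝ)} {trs : List (TTrans S I O)} :
      tr ∈ M → tr.src = s → tr.inp = i → GuardMem tr.guard (t - t0) →
      TRunTo M tr.dst t rest trs sf →
      TRunTo M s t0 ((i, t) :: rest) (tr :: trs) sf

/-- `α` induces the sequence of transitions `trs` from state `s`. -/
def TInduces (M : TFSM S I O) (s : S) (α : List (I × ℝ)) (trs : List (TTrans S I O)) : Prop :=
  ∃ sf : S, TRunTo M s 0 α trs sf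

/-- `Dom(s)`: the timed input sequences inducing at least one sequence of transitions from `s`. -/
def TDom (M : TFSM S I O) (s : S) : Set (List (I × ℝ)) :=
  { α | IsTimedInputSeq α ∧ ∃ trs, TInduces M s α trs }

/-- `next_state(s, α) = sf` (as a relation, since `next_state` is partial). -/
def TReaches (M : TFSM S I O) (s : S) (α : List (I × ℝ)) (sf : S) : Prop :=
  ∃ trs, TRunTo M s 0 α trs sf

/-- The timed outputs of a run: the `j`-th transition produces its output at time
`t_j + d_j`. -/
def rawOutputs (α : List (I × ℝ)) (trs : List (TTrans S I O)) : List (O × ℝ) :=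
  List.zipWith (fun p tr => (tr.out, p.2 + ((tr.delay : ℕ) : ℝ))) α trs

/-- `timed_out(s, α)`: all time-sorted reorderings of the timed outputs of the run of `α` at `s`. -/
def timedOut (M : TFSM S I O) (s : S) (α : List (I × ℝ)) : Set (List (O × ℝ)) :=
  { β | ∃ trs sf, TRunTo M s 0 α trs sf ∧ List.Perm β (rawOutputs α trs) ∧
        List.Chain' (· ≤ ·) (β.map Prod.snd) }

/-- Homing sequence for a TFSM with output delays. -/
def THoming (M : TFSM S I O) (α : List (I × ℝ)) : Prop :=
  IsTimedInputSeq α ∧ ∀ s1 s2 : S, timedOut M s1 α = timedOut M s2 α →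
    ∃ sf : S, TReaches M s1 α sf ∧ TReaches M s2 α sf

/-- Synchronizing sequence for a TFSM with output delays. -/
def TSync (M : TFSM S I O) (α : List (I × ℝ)) : Prop :=
  IsTimedInputSeq α ∧ ∃ sf : S, ∀ s : S, TReaches M s α sf

/-- A timed input sequence is non-integer if the difference of any two distinct
timestamps is not an integer. -/
def NonInteger (α : List (I × ℝ)) : Prop :=
  ∀ j k : Fin α.length, j ≠ k → ∀ z : ℤ, (α.get j).2 - (α.get k).2 ≠ (z : ℝ)

/-- A transition of an (untimed) FSM. -/
structure FTrans (S A B : Type) where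
  src : S
  inp : A
  out : B
  dst : S

/-- An (untimed) FSM given by its transition relation. -/
abbrev UntimedFSM (S A B : Type) := Set (FTrans S A B)

/-- FSM run: input sequence, produced output sequence, final state. -/
inductive FRunTo (T : UntimedFSM S A B) : S → List A → List B → S → Prop
  | nil (s : S) : FRunTo T s [] [] s
  | cons {s sf : S} {a : A} {rest : List A} {γ : List B} {f : FTrans S A B} :
      f ∈ T → f.src = s → f.inp = a → FRunTo T f.dst rest γ sf →
      FRunTo T s (a :: rest) (f.out :: γ) sf

def FReaches (T : UntimedFSM S A B) (s : S) (β : List A) (sf : S) : Prop :=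
  ∃ γ, FRunTo T s β γ sf

/-- `out(s, β)` for an FSM (a set, i.e. a partial value, since the FSM may be partial). -/
def FOut (T : UntimedFSM S A B) (s : S) (β : List A) : Set (List B) :=
  { γ | ∃ sf, FRunTo T s β γ sf }

def FDeterministic (T : UntimedFSM S A B) : Prop :=
  ∀ f ∈ T, ∀ f' ∈ T, f.src = f'.src → f.inp = f'.inp → f = f'

/-- Completeness of an FSM relative to an input alphabet `A0`. -/
def FCompleteOn (T : UntimedFSM S A B) (A0 : Set A) : Prop :=
  ∀ s : S, ∀ a ∈ A0, ∃ f ∈ T, f.src = s ∧ f.inp = a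

/-- Synchronizing sequence for an FSM. -/
def FSync (T : UntimedFSM S A B) (β : List A) : Prop :=
  ∃ sf : S, ∀ s : S, FReaches T s β sf

/-- Homing sequence for an FSM. -/
def FHoming (T : UntimedFSM S A B) (β : List A) : Prop :=
  ∀ s1 s2 : S, FOut T s1 β = FOut T s2 β →
    ∃ sf : S, FReaches T s1 β sf ∧ FReaches T s2 β sf

/-- The guards appearing on transitions labeled with input `i`. -/
def guardsOf (M : TFSM S I O) (i : I) : Set Guard :=
  { g | ∃ tr ∈ M, tr.inp = i ∧ tr.guard = g }

/-- Boundary points of the guards labeled `i`. -/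
def boundaries (M : TFSM S I O) (i : I) : Set ℕ :=
  { p | ∃ g ∈ guardsOf M i, g.lo = p ∨ g.hi = p }

/-- `Ḡ_i`: the half-open intervals determined by consecutive boundary points of `G_i`. -/
def refinedGuards (M : TFSM S I O) (i : I) : Set Guard :=
  { g | g.rightClosed = false ∧ g.lo ∈ boundaries M i ∧ g.hi ∈ boundaries M i ∧
        g.lo < g.hi ∧ ∀ r ∈ boundaries M i, ¬ (g.lo < r ∧ r < g.hi) }

/-- The abstract input alphabet `I_G = {(i, g) : g ∈ Ḡ_i}`. -/
def absInputs (M : TFSM S I O) : Set (I × Guard) :=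
  { p | p.2 ∈ refinedGuards M p.1 }

/-- The region FSM `R(S)` of a TFSM with output delays. -/
def regionFSM (M : TFSM S I O) : UntimedFSM S (I × Guard) (O × ℕ+) :=
  { f | f.inp ∈ absInputs M ∧ ∃ tr ∈ M, tr.src = f.src ∧ tr.inp = f.inp.1 ∧
        tr.out = f.out.1 ∧ tr.delay = f.out.2 ∧ tr.dst = f.dst ∧ GuardSub f.inp.2 tr.guard }

/-- All guards are half-open intervals `[u, v)` with `u < v`. -/
def HalfOpenGuards (M : TFSM S I O) : Prop :=
  ∀ tr ∈ M, tr.guard.rightClosed = false ∧ tr.guard.lo < tr.guard.hi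

/-- Weak completeness: all states have the same domain. -/
def WeaklyComplete (M : TFSM S I O) : Prop :=
  ∀ s s' : S, TDom M s = TDom M s'

/-- `Projects M t0 α β`: `β` is the untimed projection `[α]_{I_G}` of `α`
(relative to previous timestamp `t0`). -/
inductive Projects (M : TFSM S I O) : ℝ → List (I × ℝ) → List (I × Guard) → Prop
  | nil (t0 : ℝ) : Projects M t0 [] []
  | cons {t0 t : ℝ} {i : I} {g : Guard} {rest : List (I × ℝ)} {brest : List (I × Guard)} :
      g ∈ refinedGuards M i → GuardMem g (t - t0) →
      Projects M t rest brest →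
      Projects M t0 ((i, t) :: rest) ((i, g) :: brest)

/-- All guards are point intervals `[u, u]` with `u` a positive integer. -/
def PointIntervals (M : TFSM S I O) : Prop :=
  ∀ tr ∈ M, tr.guard.rightClosed = true ∧ tr.guard.lo = tr.guard.hi ∧ 0 < tr.guard.lo

/-- The region FSM of a TFSM with only point intervals: abstract inputs are the
(input, guard) pairs appearing on transitions. -/
def pointRegionFSM (M : TFSM S I O) : UntimedFSM S (I × Guard) (O × ℕ+) :=
  { f | ∃ tr ∈ M, tr.src = f.src ∧ (tr.inp, tr.guard) = f.inp ∧
        (tr.out, tr.delay) = f.out ∧ tr.dst = f.dst }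

/-- `t(α)`: the last timestamp of `α` (0 for the empty sequence). -/
def tEnd (α : List (I × ℝ)) : ℝ := (α.map Prod.snd).getLastD 0

/-- The number of timed outputs of the run produced at or after time `t(α)`
(counted with multiplicity). -/
noncomputable def tailCount (α : List (I × ℝ)) (trs : List (TTrans S I O)) : ℕ :=
  ((rawOutputs α trs).filter (fun p => decide (tEnd α ≤ p.2))).length

/-- The timed output tail of a run: the multiset of `(o, τ - t(α))` over timed
outputs `(o, τ)` of the run with `τ ≥ t(α)`. -/
noncomputable def tailOf (α : List (I × ℝ)) (trs : List (TTrans S I O)) : Multiset (O × ℝ) :=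
  ↑(((rawOutputs α trs).filter (fun p => decide (tEnd α ≤ p.2))).map
      (fun p => (p.1, p.2 - tEnd α)))

/-- The set of all timed output tails of the TFSM, together with the empty tail. -/
def Tout (M : TFSM S I O) : Set (Multiset (O × ℝ)) :=
  insert 0 { m | ∃ (s : S) (α : List (I × ℝ)) (trs : List (TTrans S I O)) (sf : S),
    α ∈ TDom M s ∧ TRunTo M s 0 α trs sf ∧ m = tailOf α trs }

/-- The output delay at state `j` of the machine `B_n`. -/
def BnDelay (n : ℕ) (j : Fin n) : ℕ+ :=
  if (j : ℕ) = n - 2 then 3 else if (j : ℕ) = n - 1 then 1 else 2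

/-- The transition of `B_n` out of state `j`. -/
def BnTrans (n : ℕ) [NeZero n] (j : Fin n) : TTrans (Fin n) Unit Unit :=
  ⟨j, (), ⟨1, 1, true⟩, (), BnDelay n j, j + 1⟩

/-- The TFSM `B_n` with only point intervals. -/
def Bn (n : ℕ) [NeZero n] : TFSM (Fin n) Unit Unit := Set.range (BnTrans n)

/-- Every state of `R(B_n)` accepts any number of repetitions of the abstract input. -/
lemma exists_run (n : ℕ) [NeZero n] (m : ℕ) (s : Fin n) :
    ∃ γ sf, FRunTo (pointRegionFSM (Bn n)) s
      (List.replicate m (((), (⟨1, 1, true⟩ : Guard)) : Unit × Guard)) γ sf := by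
  induction m generalizing s with
  | zero => exact ⟨[], s, .nil s⟩
  | succ m ih =>
    obtain ⟨γ, sf, h⟩ := ih (s + 1)
    let f : FTrans (Fin n) (Unit × Guard) (Unit × ℕ+) :=
      ⟨s, ((), ⟨1, 1, true⟩), ((), BnDelay n s), s + 1⟩
    have hf : f ∈ pointRegionFSM (Bn n) := ⟨BnTrans n s, ⟨s, rfl⟩, rfl, rfl, rfl, rfl⟩
    exact ⟨f.out :: γ, sf, .cons hf rfl rfl h⟩

/-- As long as a run from `s` has not wrapped around, its `i`-th output is the delay at `s + i`. -/
lemma FRunTo.getElem_out {n : ℕ} [NeZero n] {s sf : Fin n} {β : List (Unit × Guard)}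
    {γ : List (Unit × ℕ+)} (h : FRunTo (pointRegionFSM (Bn n)) s β γ sf) :
    ∀ i (hi : (s : ℕ) + i < n), i < β.length → γ[i]? = some ((), BnDelay n ⟨s + i, hi⟩) := by
  induction h with
  | nil s => intro i hi hl; simp at hl
  | @cons s sf a rest γ f hf hs ha _ ih =>
    obtain ⟨tr, ⟨j, rfl⟩, hsrc, -, hout, hdst⟩ := hf
    have hj : j = s := hsrc.trans hs
    subst hj
    intro i hi hl
    cases i with
    | zero => simp [← hout, BnTrans]
    | succ i =>
      have hv : (f.dst : ℕ) = j + 1 := by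
        rw [← hdst]
        have h1 : 1 < n := by omega
        change ((j + 1 : Fin n) : ℕ) = j + 1
        rw [Fin.val_add, Fin.val_one', Nat.mod_eq_of_lt h1, Nat.mod_eq_of_lt (by omega)]
      have := ih i (by omega) (by simpa using hl)
      rw [List.getElem?_cons_succ, this]
      congr 4
      omega

/-- Two states showing the same delays for `n - 2` steps, compared only where neither has wrapped
around, are equal. -/
lemma eq_of_delays {n : ℕ} (hn : 3 < n) {s t : Fin n}
    (h : ∀ i (hs : (s : ℕ) + i < n) (ht : (t : ℕ) + i < n), i < n - 2 →
      BnDelay n ⟨s + i, hs⟩ = BnDelay n ⟨t + i, ht⟩) : s = t := by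
  wlog hlt : (s : ℕ) < t generalizing s t
  · rcases Nat.lt_or_ge (t : ℕ) s with h' | h'
    · exact (this (fun i hs ht hi => (h i ht hs hi).symm) h').symm
    · exact Fin.ext (by omega)
  exfalso
  have ht := t.2
  by_cases hl : (t : ℕ) = n - 1
  · have := h 0 (by omega) (by omega) (by omega)
    simp only [BnDelay, add_zero] at this
    rw [if_neg (show ¬ (t : ℕ) = n - 2 by omega), if_pos hl,
      if_neg (show ¬ (s : ℕ) = n - 1 by omega)] at this
    split_ifs at this <;> exact absurd this (by decide)
  · have := h (n - 2 - t) (by omega) (by omega) (by omega)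
    simp only [BnDelay] at this
    rw [if_neg (show ¬ (s : ℕ) + (n - 2 - t) = n - 2 by omega),
      if_neg (show ¬ (s : ℕ) + (n - 2 - t) = n - 1 by omega),
      if_pos (show (t : ℕ) + (n - 2 - t) = n - 2 by omega)] at this
    exact absurd this (by decide)

/-- for every `n > 3`, the region FSM `R(B_n)` has a homing sequence;
specifically, `n − 2` repetitions of the abstract input `(i_1, [1,1])` form a homing
sequence for `R(B_n)`. -/
theorem stmt15 (n : ℕ) [NeZero n] (hn : 3 < n) :
    (∃ β : List (Unit × Guard), FHoming (pointRegionFSM (Bn n)) β) ∧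
    FHoming (pointRegionFSM (Bn n))
      (List.replicate (n - 2) (((), (⟨1, 1, true⟩ : Guard)) : Unit × Guard)) := by
  suffices h : FHoming (pointRegionFSM (Bn n))
      (List.replicate (n - 2) (((), (⟨1, 1, true⟩ : Guard)) : Unit × Guard)) from ⟨⟨_, h⟩, h⟩
  intro s t hst
  obtain ⟨γ, sf, hs⟩ := exists_run n (n - 2) s
  obtain ⟨tf, ht⟩ := hst.subset ⟨sf, hs⟩
  have hEq : s = t := eq_of_delays hn fun i hsi hti hi => by
    have h1 := hs.getElem_out i hsi (by simpa using hi)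
    have h2 := ht.getElem_out i hti (by simpa using hi)
    rw [h1] at h2
    simpa using h2
  subst hEq
  exact ⟨sf, ⟨γ, hs⟩, ⟨γ, hs⟩⟩
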